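/- arXiv:2209.02418 — 2 statements merged into one kernel-verified Lean document; each statement's English description precedes it below -/
import Mathlib

section
/- Let V be a real vector space equipped with a symmetric positive semidefinite bilinear form a, let H be a real inner product space, let S, J : V → H be linear maps, and let C_I > 0 satisfy the inverse (discrete trace) estimate C_I·‖S w‖² ≤ a(w, w) for all w ∈ V. For α > 0 define the stabilized bilinear form B_h on (V × H) × (V × H) by B_h((w, ξ), (v, μ)) = a(w, v) + ⟨μ, J w⟩ + ⟨ξ, J v⟩ − α·⟨ξ + S w, μ + S v⟩. If 0 < α < C_I, then for every (w, ξ) ∈ V × H one has B_h((w, ξ), (w, −ξ)) ≥ (1 − α/C_I)·a(w, w) + α·‖ξ‖², and consequently B_h((w, ξ), (w, −ξ)) ≥ min(1 − α/C_I, α)·(a(w, w) + ‖ξ‖²). -/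
/-!
Testing the stabilized form with `(w, -ξ)` gives the identity
`B (w, ξ) (w, -ξ) = a w w + α ‖ξ‖² - α ‖S w‖²`. The trace estimate bounds the only negative term
by `(α / C_I) * a w w`, which yields the first inequality; the second follows since both `a w w`
and `‖ξ‖²` are nonnegative.
-/

open scoped RealInnerProductSpace

/-- Abstract form of Theorem 1 (discrete stability of the stabilized mortar
method for linear elasticity). -/
theorem stabilized_discrete_stability
    {V H : Type*} [AddCommGroup V] [Module ℝ V]
    [NormedAddCommGroup H] [InnerProductSpace ℝ H]
    (a : V →ₗ[ℝ] V →ₗ[ℝ] ℝ)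
    (ha_symm : ∀ w v : V, a w v = a v w)
    (ha_psd : ∀ w : V, 0 ≤ a w w)
    (S J : V →ₗ[ℝ] H)
    (C_I : ℝ) (hC_I : 0 < C_I)
    (htrace : ∀ w : V, C_I * ‖S w‖ ^ 2 ≤ a w w)
    (α : ℝ) (hα : 0 < α) (hαC : α < C_I)
    (B : V × H → V × H → ℝ)
    (hB : ∀ (w : V) (ξ : H) (v : V) (μ : H),
      B (w, ξ) (v, μ) =
        a w v + ⟪μ, J w⟫ + ⟪ξ, J v⟫ - α * ⟪ξ + S w, μ + S v⟫) :
    ∀ (w : V) (ξ : H),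
      (1 - α / C_I) * a w w + α * ‖ξ‖ ^ 2 ≤ B (w, ξ) (w, -ξ) ∧
      min (1 - α / C_I) α * (a w w + ‖ξ‖ ^ 2) ≤ B (w, ξ) (w, -ξ) := by
  intro w ξ
  -- Testing with `(w, -ξ)` cancels the two coupling terms, and the stabilization term becomes
  -- a difference of squares because the mixed products `⟪ξ, S w⟫` cancel by symmetry.
  have hBeq : B (w, ξ) (w, -ξ) = a w w + α * ‖ξ‖ ^ 2 - α * ‖S w‖ ^ 2 := by
    rw [hB]
    simp only [inner_add_left, inner_add_right, inner_neg_left, inner_neg_right,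
      real_inner_self_eq_norm_sq, real_inner_comm ξ (S w)]
    ring
  have hS : α * ‖S w‖ ^ 2 ≤ α / C_I * a w w := by
    calc α * ‖S w‖ ^ 2 = α / C_I * (C_I * ‖S w‖ ^ 2) := by field_simp
      _ ≤ α / C_I * a w w := by gcongr; exact htrace w
  have h1 : (1 - α / C_I) * a w w + α * ‖ξ‖ ^ 2 ≤ B (w, ξ) (w, -ξ) := by
    rw [hBeq]; linarith
  refine ⟨h1, le_trans ?_ h1⟩
  rw [mul_add]
  exact add_le_add (mul_le_mul_of_nonneg_right (min_le_left _ _) (ha_psd w))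
    (mul_le_mul_of_nonneg_right (min_le_right _ _) (sq_nonneg _))
end

section
/- Let X be a real normed space, X_h ⊆ X a linear subspace, and B : X × X → ℝ a bilinear form that is bounded with constant M > 0, i.e. |B(x, y)| ≤ M·‖x‖·‖y‖ for all x, y ∈ X. Suppose T : X → X is a linear map that maps X_h into X_h, satisfies ‖T x‖ ≤ ‖x‖ for all x ∈ X, and for which there exists c > 0 with B(y, T y) ≥ c·‖y‖² for all y ∈ X_h. If u ∈ X and u_h ∈ X_h satisfy the Galerkin orthogonality B(u − u_h, y) = 0 for all y ∈ X_h, then for every v ∈ X_h one has ‖u − u_h‖ ≤ (1 + M/c)·‖u − v‖; in particular the error ‖u − u_h‖ is bounded by (1 + M/c) times the best-approximation error from X_h. -/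
/-!
Céa's argument with the test function `T (uh - v)`: stability on `Xh`, Galerkin orthogonality and
boundedness give `c ‖uh - v‖² ≤ B (u - v) (T (uh - v)) ≤ M ‖u - v‖ ‖uh - v‖`, hence
`‖uh - v‖ ≤ (M / c) ‖u - v‖`, and the triangle inequality through `v` concludes.
-/

/-- Abstract (Céa-type) form of Theorem 2: quasi-optimality of the stabilized
mortar method. -/
theorem quasi_optimality
    {X : Type*} [NormedAddCommGroup X] [NormedSpace ℝ X]
    (Xh : Submodule ℝ X)
    (B : X →ₗ[ℝ] X →ₗ[ℝ] ℝ)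
    (M : ℝ) (hM : 0 < M)
    (hbound : ∀ x y : X, |B x y| ≤ M * ‖x‖ * ‖y‖)
    (T : X →ₗ[ℝ] X)
    (hTmap : ∀ x ∈ Xh, T x ∈ Xh)
    (hTnorm : ∀ x : X, ‖T x‖ ≤ ‖x‖)
    (c : ℝ) (hc : 0 < c)
    (hstab : ∀ y ∈ Xh, c * ‖y‖ ^ 2 ≤ B y (T y))
    (u uh : X) (huh : uh ∈ Xh)
    (horth : ∀ y ∈ Xh, B (u - uh) y = 0) :
    ∀ v ∈ Xh, ‖u - uh‖ ≤ (1 + M / c) * ‖u - v‖ := by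
  intro v hv
  have hy : uh - v ∈ Xh := Xh.sub_mem huh hv
  -- Galerkin orthogonality replaces the discrete error `uh - v` by `u - v` in the first slot.
  have hB : B (uh - v) (T (uh - v)) = B (u - v) (T (uh - v)) := by
    have h0 := horth _ (hTmap _ hy)
    have hsplit : u - v = (u - uh) + (uh - v) := by abel
    rw [hsplit, map_add, LinearMap.add_apply, h0, zero_add]
  have hkey : c * ‖uh - v‖ ^ 2 ≤ M * ‖u - v‖ * ‖uh - v‖ :=
    calc c * ‖uh - v‖ ^ 2 ≤ B (u - v) (T (uh - v)) := hB ▸ hstab _ hy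
      _ ≤ M * ‖u - v‖ * ‖T (uh - v)‖ := (le_abs_self _).trans (hbound _ _)
      _ ≤ M * ‖u - v‖ * ‖uh - v‖ := by gcongr; exact hTnorm _
  have hdisc : ‖uh - v‖ ≤ M / c * ‖u - v‖ := by
    rw [div_mul_eq_mul_div, le_div_iff₀ hc]
    rcases (norm_nonneg (uh - v)).eq_or_lt with h | h
    · rw [← h, zero_mul]
      positivity
    · refine le_of_mul_le_mul_right ?_ h
      linarith
  have htri : ‖u - uh‖ ≤ ‖u - v‖ + ‖uh - v‖ := by
    simpa using norm_sub_le (u - v) (uh - v)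
  linarith
end
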